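/- Let r ≥ 3 and suppose n is a positive integer and α a real number with (ln n)^{-1/(r-1)} ≤ α ≤ r^{-3}. Let U_1,…,U_r be sets each of size n, and let M ⊆ U_1 × ⋯ × U_r satisfy |M| ≥ α·n^r. If positive integers s_1,…,s_{r−1} satisfy s_1·s_2···s_{r−1} ≤ α^{r−1}·ln n, then there exist sets V_1,…,V_r with V_i ⊆ U_i for all i, |V_i| = s_i for 1 ≤ i ≤ r−1, |V_r| > n^{1−α^{r−2}}, and V_1 × ⋯ × V_r ⊆ M. -/

import Mathlib

/-!
The proof is an iterated Kővári–Sós–Turán argument. Regard `M ⊆ U 0 × B`, where `B` is the product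
of the remaining sets, as a bipartite graph of density `δ`. Counting pairs (`s`-subset of `U 0`,
common neighbour in `B`) and applying the power mean inequality produces an `s`-subset of `U 0`
whose common neighbourhood in `B` has density at least `(δ - s / n) ^ s ≥ (δ / 2) ^ s`
(`exists_subset_common_nbhd`). The common neighbourhood is again a set of tuples, one coordinate
shorter, so induction applies: after the first `k` coordinates the density is still at least
`(α / 2 ^ k) ^ (s 0 ⋯ s (k - 1))` (`exists_box`).

With `k = r - 1` and `S = s 0 ⋯ s (k - 1) ≤ α ^ k * log n` this is at least `n ^ (-α ^ (k - 1) / 2)`,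
because `α * (log (1 / α) + k * log 2) ≤ 1 / 2` for `α ≤ r ^ (-3)` (`entropy_bound`). That leaves
room both for the strict inequality claimed and for the condition `s i ≤ δ n / 2` needed at every
step.
-/

/-- One Kővári–Sós–Turán step: for a relation of density at least `δ` between `A` (of size `n`) and
`B`, some `s`-subset of `A` has a common neighbourhood of density at least `(δ / 2) ^ s` in `B`. The
hypothesis `2 * s ≤ δ * n` lets the true bound `(δ - s / n) ^ s` be replaced by this one. -/
theorem exists_subset_common_nbhd {α β : Type*} [DecidableEq α] (A : Finset α) (B : Finset β)
    (R : α → β → Prop) [∀ a b, Decidable (R a b)] (n s : ℕ) (hA : A.card = n) (δ : ℝ)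
    (hs : 1 ≤ s) (hsn : s ≤ n) (hδs : 2 * (s : ℝ) ≤ δ * n)
    (hR : δ * n * B.card ≤ ∑ b ∈ B, (((A.filter (fun a => R a b)).card : ℕ) : ℝ)) :
    ∃ V ⊆ A, V.card = s ∧
      (δ / 2) ^ s * B.card ≤ ((B.filter (fun b => ∀ a ∈ V, R a b)).card : ℝ) := by
  classical
  by_contra! hcon
  have hn : (0 : ℝ) < n := by exact_mod_cast (by omega : 0 < n)
  have hδ : 0 < δ := by
    have : (0 : ℝ) < s := by exact_mod_cast hs
    by_contra! h
    nlinarith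
  have hsum : ∑ b ∈ B, ((A.filter (fun a => R a b)).card.choose s) =
      ∑ V ∈ A.powersetCard s, (B.filter (fun b => ∀ a ∈ V, R a b)).card := by
    simp_rw [Finset.card_filter _ B]
    rw [Finset.sum_comm]
    refine Finset.sum_congr rfl fun b _ => ?_
    rw [← Finset.card_filter, ← Finset.card_powersetCard]
    congr 1
    ext V
    simp only [Finset.mem_powersetCard, Finset.mem_filter, Finset.subset_iff]
    grind
  have hne : (A.powersetCard s).Nonempty := by
    rw [Finset.powersetCard_nonempty]; omega
  have hlt : (∑ V ∈ A.powersetCard s, ((B.filter (fun b => ∀ a ∈ V, R a b)).card : ℝ)) <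
      ∑ V ∈ A.powersetCard s, (δ / 2) ^ s * (B.card : ℝ) := by
    refine Finset.sum_lt_sum_of_nonempty hne fun V hV => ?_
    rw [Finset.mem_powersetCard] at hV
    exact hcon V hV.1 hV.2
  rw [Finset.sum_const, Finset.card_powersetCard, hA, nsmul_eq_mul] at hlt
  have hsum' : (∑ b ∈ B, (((A.filter (fun a => R a b)).card.choose s : ℕ) : ℝ)) <
      (n.choose s : ℝ) * ((δ / 2) ^ s * (B.card : ℝ)) := by
    rw [← Nat.cast_sum, hsum, Nat.cast_sum]; exact hlt
  have hfac : (0 : ℝ) < (s.factorial : ℝ) := by exact_mod_cast s.factorial_pos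
  have hup : (s.factorial : ℝ) * (n.choose s : ℝ) ≤ (n : ℝ) ^ s := by
    rw [← Nat.cast_mul, ← Nat.descFactorial_eq_factorial_mul_choose]
    exact_mod_cast Nat.descFactorial_le_pow n s
  have hlow : ∀ d : ℕ, (max ((d : ℝ) - s) 0) ^ s ≤ (s.factorial : ℝ) * (d.choose s : ℝ) := by
    intro d
    rw [← Nat.cast_mul, ← Nat.descFactorial_eq_factorial_mul_choose]
    have h1 : (((d + 1 - s) ^ s : ℕ) : ℝ) ≤ (d.descFactorial s : ℝ) := by
      exact_mod_cast Nat.pow_sub_le_descFactorial d s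
    refine le_trans ?_ h1
    rw [Nat.cast_pow]
    refine pow_le_pow_left₀ (le_max_right _ _) (max_le ?_ (Nat.cast_nonneg _)) _
    have : (d : ℝ) ≤ ((d + 1 - s + s : ℕ) : ℝ) := by exact_mod_cast (by omega)
    push_cast at this ⊢
    linarith
  have hB : (0 : ℝ) < B.card := by
    rcases Nat.eq_zero_or_pos B.card with h | h
    · rw [Finset.card_eq_zero] at h
      subst h
      simp at hsum'
    · exact_mod_cast h
  set D : β → ℝ := fun b => max (((A.filter (fun a => R a b)).card : ℝ) - s) 0 with hD
  have hDsum : (δ / 2 * n) * B.card ≤ ∑ b ∈ B, D b := by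
    have h1 : ∑ b ∈ B, (((A.filter (fun a => R a b)).card : ℝ) - s) ≤ ∑ b ∈ B, D b :=
      Finset.sum_le_sum fun b _ => le_max_left _ _
    rw [Finset.sum_sub_distrib, Finset.sum_const, nsmul_eq_mul] at h1
    nlinarith
  obtain ⟨t, rfl⟩ : ∃ t, s = t + 1 := ⟨s - 1, by omega⟩
  have hpm : (∑ b ∈ B, D b) ^ (t + 1) / (B.card : ℝ) ^ t ≤ ∑ b ∈ B, D b ^ (t + 1) :=
    pow_sum_div_card_le_sum_pow (fun _ _ => le_max_right _ _) t
  have hpow : ((δ / 2 * n) * B.card) ^ (t + 1) ≤ (∑ b ∈ B, D b) ^ (t + 1) :=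
    pow_le_pow_left₀ (by positivity) hDsum _
  have hchain : (δ / 2 * n) ^ (t + 1) * B.card ≤ ∑ b ∈ B, D b ^ (t + 1) := by
    refine le_trans ?_ hpm
    rw [le_div_iff₀ (by positivity)]
    calc (δ / 2 * n) ^ (t + 1) * B.card * (B.card : ℝ) ^ t
        = ((δ / 2 * n) * B.card) ^ (t + 1) := by ring
      _ ≤ _ := hpow
  have hDle : ∑ b ∈ B, D b ^ (t + 1) ≤ ((t + 1).factorial : ℝ) *
      ∑ b ∈ B, (((A.filter (fun a => R a b)).card.choose (t + 1) : ℕ) : ℝ) := by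
    rw [Finset.mul_sum]
    exact Finset.sum_le_sum fun b _ => hlow _
  have hend : ((t + 1).factorial : ℝ) * ((n.choose (t + 1) : ℝ) * ((δ / 2) ^ (t + 1) * B.card)) ≤
      (δ / 2 * n) ^ (t + 1) * B.card := by
    rw [mul_pow, ← mul_assoc]
    have := mul_le_mul_of_nonneg_right hup
      (by positivity : (0 : ℝ) ≤ (δ / 2) ^ (t + 1) * B.card)
    linarith
  have := mul_lt_mul_of_pos_left hsum' hfac
  linarith

/-- Iterated step: a set `M` of `(k + 1)`-tuples of density at least `δ` contains a box with prescribed sizes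
`s i` in the first `k` coordinates whose last side has density at least
`(δ / 2 ^ k) ^ (s 0 ⋯ s (k - 1))`, provided that this quantity times `n` is at least `2 * s i` for
every `i`. -/
theorem exists_box {γ : Type*} [DecidableEq γ] (n : ℕ) (hn : 0 < n) (k : ℕ) :
    ∀ (U : Fin (k + 1) → Finset γ) (M : Finset (Fin (k + 1) → γ)) (s : ℕ → ℕ) (δ : ℝ),
      (∀ i, (U i).card = n) → (∀ f ∈ M, ∀ i, f i ∈ U i) → 0 < δ → δ ≤ 1 →
      δ * (n : ℝ) ^ (k + 1) ≤ (M.card : ℝ) → (∀ i < k, 1 ≤ s i) →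
      (∀ i < k, 2 * (s i : ℝ) ≤ (δ / 2 ^ k) ^ (∏ i ∈ Finset.range k, s i) * n) →
      ∃ V : Fin (k + 1) → Finset γ, (∀ i, V i ⊆ U i) ∧
        (∀ i : Fin (k + 1), (i : ℕ) < k → (V i).card = s i) ∧
        (δ / 2 ^ k) ^ (∏ i ∈ Finset.range k, s i) * n ≤ ((V (Fin.last k)).card : ℝ) ∧
        ∀ f : Fin (k + 1) → γ, (∀ i, f i ∈ V i) → f ∈ M := by
  induction k with
  | zero =>
    intro U M s δ hU hMU hδ hδ1 hM hs hsn
    refine ⟨fun i => M.image (fun f => f i), ?_, ?_, ?_, ?_⟩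
    · intro i x hx
      obtain ⟨f, hf, rfl⟩ := Finset.mem_image.1 hx
      exact hMU f hf i
    · intro i hi; omega
    · rw [Finset.card_image_of_injective]
      · simpa using hM
      · intro f g h
        funext i
        rw [show i = Fin.last 0 by ext; simp]
        exact h
    · intro f hf
      obtain ⟨g, hg, h⟩ := Finset.mem_image.1 (hf 0)
      have : g = f := by
        funext i
        rw [show i = 0 by ext; simp]
        exact h
      exact this ▸ hg
  | succ k ih =>
    intro U M s δ hU hMU hδ hδ1 hM hs hsn
    classical
    have hn' : (0 : ℝ) < n := by exact_mod_cast hn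
    set B : Finset (Fin (k + 1) → γ) := Fintype.piFinset (fun i => U i.succ) with hBdef
    have hBcard : B.card = n ^ (k + 1) := by
      rw [hBdef, Fintype.card_piFinset]
      simp [hU]
    have hδpow : (1 : ℝ) ≤ 2 ^ (k + 1) := one_le_pow₀ (by norm_num)
    have hδle : δ / 2 ^ (k + 1) ≤ δ := div_le_self hδ.le hδpow
    have hS : 1 ≤ ∏ i ∈ Finset.range (k + 1), s i :=
      Finset.one_le_prod' fun i hi => hs i (Finset.mem_range.1 hi)
    have hbase : (δ / 2 ^ (k + 1)) ^ (∏ i ∈ Finset.range (k + 1), s i) ≤ δ :=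
      (pow_le_of_le_one (by positivity) (hδle.trans hδ1) (by omega)).trans hδle
    have hs0 : 2 * (s 0 : ℝ) ≤ δ * n :=
      (hsn 0 (by omega)).trans (mul_le_mul_of_nonneg_right hbase hn'.le)
    have hs0n : s 0 ≤ n := by
      have h1 : (s 0 : ℝ) ≤ n := by
        have : (0 : ℝ) ≤ s 0 := Nat.cast_nonneg _
        nlinarith
      exact_mod_cast h1
    have hcount : M.card =
        ∑ b ∈ B, ((U 0).filter (fun a => (Fin.cons a b : Fin (k + 2) → γ) ∈ M)).card := by
      rw [Finset.card_eq_sum_card_fiberwise (f := fun f => Fin.tail f) (t := B)]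
      · refine Finset.sum_congr rfl fun b _ => ?_
        refine Finset.card_bij' (fun f _ => f 0) (fun a _ => Fin.cons a b) ?_ ?_ ?_ ?_
        · intro f hf
          obtain ⟨hfM, rfl⟩ := Finset.mem_filter.1 hf
          rw [Finset.mem_filter, Fin.cons_self_tail]
          exact ⟨hMU f hfM 0, hfM⟩
        · intro a ha
          rw [Finset.mem_filter] at ha ⊢
          exact ⟨ha.2, Fin.tail_cons _ _⟩
        · intro f hf
          obtain ⟨hfM, rfl⟩ := Finset.mem_filter.1 hf
          exact Fin.cons_self_tail f
        · intro a ha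
          exact Fin.cons_zero _ _
      · intro f hf
        simp only [hBdef, Finset.mem_coe, Fintype.mem_piFinset]
        exact fun i => hMU f hf i.succ
    obtain ⟨V₀, hV₀U, hV₀c, hV₀⟩ := exists_subset_common_nbhd (U 0) B
      (fun a b => (Fin.cons a b : Fin (k + 2) → γ) ∈ M) n (s 0) (hU 0) δ (hs 0 (by omega)) hs0n hs0
      (by
        rw [← Nat.cast_sum, ← hcount, hBcard]
        refine le_trans (le_of_eq ?_) hM
        push_cast; ring)
    set N := B.filter (fun b => ∀ a ∈ V₀, (Fin.cons a b : Fin (k + 2) → γ) ∈ M) with hN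
    -- The extra factor `2 ^ k` is absorbed into the power `s 0`, which is at least `1`.
    have hstep : (δ / 2 ^ (k + 1)) ^ (∏ i ∈ Finset.range (k + 1), s i) ≤
        ((δ / 2) ^ s 0 / 2 ^ k) ^ (∏ i ∈ Finset.range k, s (i + 1)) := by
      rw [Finset.prod_range_succ', mul_comm, pow_mul]
      refine pow_le_pow_left₀ (by positivity) ?_ _
      have h1 : δ / 2 ^ (k + 1) = (δ / 2) / 2 ^ k := by rw [pow_succ]; field_simp
      rw [h1, div_pow (δ / 2)]
      refine div_le_div_of_nonneg_left (by positivity) (by positivity) ?_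
      exact le_self_pow₀ (one_le_pow₀ (by norm_num)) (by have := hs 0 (by omega); omega)
    obtain ⟨V, hVU, hVc, hVl, hVM⟩ := ih (fun i => U i.succ) N (fun i => s (i + 1)) ((δ / 2) ^ s 0)
      (fun i => hU _)
      (fun f hf i => by
        have := (Finset.mem_filter.1 hf).1
        exact Fintype.mem_piFinset.1 this i)
      (by positivity) (pow_le_one₀ (by positivity) (by linarith))
      (by rw [hBcard] at hV₀; exact_mod_cast hV₀)
      (fun i hi => hs (i + 1) (by omega))
      (fun i hi => (hsn (i + 1) (by omega)).trans (mul_le_mul_of_nonneg_right hstep hn'.le))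
    refine ⟨Fin.cons V₀ V, ?_, ?_, ?_, ?_⟩
    · intro i
      refine Fin.cases ?_ (fun j => ?_) i
      · exact hV₀U
      · exact hVU j
    · intro i
      refine Fin.cases ?_ (fun j => ?_) i
      · exact fun _ => hV₀c
      · intro hj
        have := hVc j (by simpa using hj)
        simpa using this
    · exact (mul_le_mul_of_nonneg_right hstep hn'.le).trans hVl
    · intro f hf
      have h1 : Fin.tail f ∈ N := hVM _ fun i => hf i.succ
      have h2 := (Finset.mem_filter.1 h1).2 (f 0) (hf 0)
      rwa [Fin.cons_self_tail] at h2

/-- A density `(α / 2 ^ k) ^ S` with `S ≤ α ^ k * log n` loses at most `α ^ (k - 1) / 2` in the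
exponent of `n`; this is the numerical inequality behind that. -/
theorem entropy_bound (k : ℕ) (hk : 2 ≤ k) (α : ℝ) (hα : 0 < α)
    (hα₂ : α ≤ (((k : ℝ) + 1) ^ 3)⁻¹) : α * (-Real.log (α / 2 ^ k)) ≤ 1 / 2 := by
  have hk' : (2 : ℝ) ≤ k := by exact_mod_cast hk
  have hα3 : α * ((k : ℝ) + 1) ^ 3 ≤ 1 := by
    rwa [← le_div_iff₀ (by positivity), one_div]
  have h27 : 27 * α ≤ 1 := by
    have : (27 : ℝ) ≤ ((k : ℝ) + 1) ^ 3 := by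
      calc (27 : ℝ) = 3 ^ 3 := by norm_num
        _ ≤ _ := pow_le_pow_left₀ (by norm_num) (by linarith) _
    nlinarith
  have hk9 : 9 * (α * k) ≤ 1 := by
    have : 9 * (k : ℝ) ≤ ((k : ℝ) + 1) ^ 3 := by
      have : (9 : ℝ) ≤ ((k : ℝ) + 1) ^ 2 := by nlinarith
      nlinarith
    nlinarith
  have hl2 := Real.log_two_lt_d9
  have hl0 : 0 < Real.log 2 := Real.log_pos (by norm_num)
  -- `log x ≤ x / 4 - 1 + log 4` at `x = 1 / α`.
  have hlog : -Real.log α ≤ α⁻¹ / 4 - 1 + 2 * Real.log 2 := by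
    have h1 := Real.log_le_sub_one_of_pos (by positivity : (0 : ℝ) < α⁻¹ / 4)
    rw [Real.log_div (by positivity) (by norm_num), Real.log_inv,
      show (4 : ℝ) = 2 ^ 2 by norm_num, Real.log_pow] at h1
    push_cast at h1
    linarith
  rw [Real.log_div hα.ne' (by positivity), Real.log_pow]
  have h2 : α * (-Real.log α) ≤ α * (α⁻¹ / 4 - 1 + 2 * Real.log 2) :=
    mul_le_mul_of_nonneg_left hlog hα.le
  have h3 : α * α⁻¹ = 1 := mul_inv_cancel₀ hα.ne'
  have h4 : α * (2 * Real.log 2 - 1) ≤ α * (1 / 2) := by gcongr; linarith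
  have h5 : α * k * Real.log 2 ≤ 1 / 9 := by
    have : 0 ≤ α * k := by positivity
    nlinarith
  nlinarith


/-- Theorem 3 of the paper: if `U 0, …, U (r-1)` are sets of size `n`, `M` is a set of
`r`-tuples (with `i`-th coordinate in `U i`) of size at least `α n^r`, and the positive
integers `s 0, …, s (r-2)` satisfy `s 0 ⋯ s (r-2) ≤ α^{r-1} ln n`, then there is a box
`V 0 × ⋯ × V (r-1) ⊆ M` with `|V i| = s i` for `i < r - 1` and `|V (r-1)| > n^{1-α^{r-2}}`. -/
theorem stmt_2 {γ : Type*} [DecidableEq γ] (r n : ℕ) (hr : 3 ≤ r) (hn : 0 < n) (α : ℝ)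
    (hα₁ : Real.log n ^ (-1 / ((r : ℝ) - 1)) ≤ α) (hα₂ : α ≤ ((r : ℝ) ^ 3)⁻¹)
    (U : Fin r → Finset γ) (hU : ∀ i, (U i).card = n)
    (M : Finset (Fin r → γ)) (hMU : ∀ f ∈ M, ∀ i, f i ∈ U i)
    (hM : α * (n : ℝ) ^ r ≤ (M.card : ℝ))
    (s : ℕ → ℕ) (hs : ∀ i < r - 1, 1 ≤ s i)
    (hsprod : ((∏ i ∈ Finset.range (r - 1), s i : ℕ) : ℝ) ≤ α ^ (r - 1) * Real.log n) :
    ∃ V : Fin r → Finset γ,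
      (∀ i, V i ⊆ U i) ∧
      (∀ i : Fin r, (i : ℕ) < r - 1 → (V i).card = s i) ∧
      (n : ℝ) ^ (1 - α ^ (r - 2)) < ((V ⟨r - 1, by omega⟩).card : ℝ) ∧
      ∀ f : Fin r → γ, (∀ i, f i ∈ V i) → f ∈ M := by
  obtain ⟨m, rfl⟩ : ∃ m, r = m + 2 := ⟨r - 2, by omega⟩
  simp only [show m + 2 - 1 = m + 1 by omega, show m + 2 - 2 = m by omega] at hs hsprod ⊢
  set S := ∏ i ∈ Finset.range (m + 1), s i with hSdef
  set L := Real.log n with hLdef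
  have hn0 : (0 : ℝ) < n := by exact_mod_cast hn
  have hS : ∀ i < m + 1, s i ≤ S := fun i hi =>
    Nat.le_of_dvd (Finset.prod_pos fun j hj => hs j (Finset.mem_range.1 hj))
      (Finset.dvd_prod_of_mem _ (Finset.mem_range.2 hi))
  have hS1 : (1 : ℝ) ≤ S := by exact_mod_cast (hs 0 (by omega)).trans (hS 0 (by omega))
  -- `n = 1` is impossible: it would give `1 ≤ S ≤ 0`.
  have hL : 0 < L := by
    rcases (Real.log_natCast_nonneg n).lt_or_eq with h | h
    · exact h
    · rw [hLdef, ← h] at hsprod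
      linarith
  have hα : 0 < α := (Real.rpow_pos_of_pos hL _).trans_le hα₁
  have hα₃ : α ≤ ((((m + 1 : ℕ) : ℝ) + 1) ^ 3)⁻¹ := by
    refine hα₂.trans (le_of_eq ?_)
    push_cast; ring
  have hα27 : 27 * α ≤ 1 := by
    have h1 : (27 : ℝ) ≤ ((m + 2 : ℕ) : ℝ) ^ 3 := by
      have : (3 : ℝ) ≤ ((m + 2 : ℕ) : ℝ) := by exact_mod_cast hr
      calc (27 : ℝ) = 3 ^ 3 := by norm_num
        _ ≤ _ := pow_le_pow_left₀ (by norm_num) this _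
    have h2 : α * ((m + 2 : ℕ) : ℝ) ^ 3 ≤ 1 := by
      rwa [← le_div_iff₀ (by positivity), one_div]
    nlinarith
  have hent := entropy_bound (m + 1) (by omega) α hα hα₃
  have hαm : α ^ m ≤ 1 := pow_le_one₀ hα.le (by linarith)
  have hαm0 : 0 < α ^ m := pow_pos hα m
  set q := α / 2 ^ (m + 1) with hq
  have hq0 : 0 < q := by positivity
  have hq1 : q ≤ 1 :=
    (div_le_self hα.le (one_le_pow₀ (by norm_num))).trans (by linarith)
  have hlogq : 0 ≤ -Real.log q := by linarith [Real.log_nonpos hq0.le hq1]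
  have hcost : (S : ℝ) * (-Real.log q) ≤ α ^ m * L / 2 := by
    calc (S : ℝ) * (-Real.log q) ≤ (α ^ (m + 1) * L) * (-Real.log q) :=
          mul_le_mul_of_nonneg_right hsprod hlogq
      _ = (α ^ m * L) * (α * (-Real.log q)) := by ring
      _ ≤ (α ^ m * L) * (1 / 2) := mul_le_mul_of_nonneg_left hent (by positivity)
      _ = _ := by ring
  have hexp : q ^ S * n = Real.exp (S * Real.log q + L) := by
    rw [Real.exp_add, Real.exp_nat_mul, Real.exp_log hq0, Real.exp_log hn0]
  obtain ⟨V, hVU, hVc, hVl, hVM⟩ := exists_box n hn (m + 1) U M s α hU hMU hα (by linarith) hM hs (by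
    intro i hi
    have h1 : (s i : ℝ) ≤ S := by exact_mod_cast hS i hi
    have h2 : (S : ℝ) ≤ α * L := by
      refine hsprod.trans ?_
      rw [pow_succ, mul_assoc]
      exact mul_le_of_le_one_left (by positivity) hαm
    have h3 : L / 2 ≤ S * Real.log q + L := by nlinarith
    have h4 := Real.add_one_le_exp (L / 2)
    have h5 := Real.exp_le_exp.2 h3
    rw [← hexp] at h5
    change 2 * (s i : ℝ) ≤ q ^ S * n
    nlinarith)
  refine ⟨V, hVU, hVc, lt_of_lt_of_le ?_ hVl, hVM⟩
  change _ < q ^ S * (n : ℝ)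
  rw [hexp, Real.rpow_def_of_pos hn0]
  refine Real.exp_lt_exp.2 ?_
  have : 0 < α ^ m * L := by positivity
  nlinarith
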